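/- arXiv:2410.19234 — 7 statements merged into one kernel-verified Lean document; each statement's English description precedes it below -/
import Mathlib

section
/- Let Ξ be a measurable space, P̂ a probability measure on Ξ, and 𝒫 a nonempty set of probability measures on Ξ. For θ ∈ [0,1] define the TRO ambiguity set 𝒫'_θ := {(1−θ)·P̂ + θ·Q : Q ∈ 𝒫}. Then the family {𝒫'_θ : θ ∈ [0,1]} is non-decreasing, i.e. 𝒫'_{θ₁} ⊆ 𝒫'_{θ₂} whenever 0 ≤ θ₁ < θ₂ ≤ 1, if and only if 𝒫 is star-shaped with star center P̂ (in particular P̂ ∈ 𝒫). -/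
open MeasureTheory

/-- The mixture `(1-θ)·P + θ·Q` of two measures. -/
noncomputable def mix {Ξ : Type*} [MeasurableSpace Ξ] (θ : ℝ) (P Q : Measure Ξ) : Measure Ξ :=
  ENNReal.ofReal (1 - θ) • P + ENNReal.ofReal θ • Q

/-- The TRO ambiguity set `𝒜'_θ = {(1-θ)·P̂ + θ·Q : Q ∈ 𝒜}`. -/
def TROset {Ξ : Type*} [MeasurableSpace Ξ] (Phat : Measure Ξ) (𝒜 : Set (Measure Ξ)) (θ : ℝ) :
    Set (Measure Ξ) := {P | ∃ Q ∈ 𝒜, P = mix θ Phat Q}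

lemma mix_one_aux {Ξ : Type*} [MeasurableSpace Ξ] (P Q : Measure Ξ) : mix 1 P Q = Q := by
  simp [mix]

lemma mix_zero_aux {Ξ : Type*} [MeasurableSpace Ξ] (P Q : Measure Ξ) : mix 0 P Q = P := by
  simp [mix]

lemma mix_mix_aux {Ξ : Type*} [MeasurableSpace Ξ] (P Q : Measure Ξ) (a b : ℝ)
    (ha0 : 0 ≤ a) (ha1 : a ≤ 1) (hb0 : 0 ≤ b) (hb1 : b ≤ 1) :
    mix a P (mix b P Q) = mix (a * b) P Q := by
  unfold mix
  rw [smul_add, smul_smul, smul_smul, ← add_assoc, ← add_smul,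
    ← ENNReal.ofReal_mul ha0, ← ENNReal.ofReal_mul ha0,
    ← ENNReal.ofReal_add (by linarith) (mul_nonneg ha0 (by linarith))]
  congr 3
  ring

/-- The family `{𝒜'_θ : θ ∈ [0,1]}` is non-decreasing iff `𝒜` is star-shaped with
star center `P̂`. -/
theorem tro_hierarchical_iff_starShaped
    {Ξ : Type*} [MeasurableSpace Ξ] (Phat : Measure Ξ) [IsProbabilityMeasure Phat]
    (𝒜 : Set (Measure Ξ)) (h𝒜ne : 𝒜.Nonempty)
    (h𝒜prob : ∀ Q ∈ 𝒜, IsProbabilityMeasure Q) :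
    (∀ θ₁ θ₂ : ℝ, 0 ≤ θ₁ → θ₁ < θ₂ → θ₂ ≤ 1 →
        TROset Phat 𝒜 θ₁ ⊆ TROset Phat 𝒜 θ₂) ↔
      (Phat ∈ 𝒜 ∧ ∀ α ∈ Set.Icc (0:ℝ) 1, ∀ P ∈ 𝒜, mix α Phat P ∈ 𝒜) := by
  constructor
  · intro h
    have key : ∀ α : ℝ, 0 ≤ α → α < 1 → ∀ P ∈ 𝒜, mix α Phat P ∈ 𝒜 := by
      intro α h0 h1 P hP
      obtain ⟨Q, hQ, hE⟩ := h α 1 h0 h1 le_rfl ⟨P, hP, rfl⟩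
      rw [mix_one_aux] at hE
      rw [hE]
      exact hQ
    refine ⟨?_, ?_⟩
    · obtain ⟨Q, hQ⟩ := h𝒜ne
      have := key 0 le_rfl one_pos Q hQ
      rwa [mix_zero_aux] at this
    · rintro α ⟨h0, h1⟩ P hP
      rcases h1.lt_or_eq with h1 | rfl
      · exact key α h0 h1 P hP
      · rwa [mix_one_aux]
  · rintro ⟨-, h⟩ θ₁ θ₂ h0 h12 h2 _ ⟨Q, hQ, rfl⟩
    have hpos : 0 < θ₂ := lt_of_le_of_lt h0 h12
    have hb0 : 0 ≤ θ₁ / θ₂ := div_nonneg h0 hpos.le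
    have hb1 : θ₁ / θ₂ ≤ 1 := (div_le_one hpos).2 h12.le
    refine ⟨mix (θ₁ / θ₂) Phat Q, h _ ⟨hb0, hb1⟩ Q hQ, ?_⟩
    rw [mix_mix_aux _ _ _ _ hpos.le h2 hb0 hb1, mul_div_cancel₀ _ hpos.ne']
end

section
/- Let Ξ be a measurable space, P̂ a probability measure on Ξ, 𝒫 a nonempty set of probability measures on Ξ, X a nonempty set, and f : X × Ξ → ℝ such that for every x ∈ X the function f(x,·) is integrable with respect to P̂ and with respect to every Q ∈ 𝒫. Assume there is C ≥ 0 with |∫ f(x,·) dP̂| ≤ C for all x ∈ X and |∫ f(x,·) dQ| ≤ C for all x ∈ X and Q ∈ 𝒫. For θ ∈ [0,1] let 𝒫'_θ := {(1−θ)·P̂ + θ·Q : Q ∈ 𝒫} and v(θ) := inf_{x∈X} sup_{P∈𝒫'_θ} ∫ f(x,·) dP. Then for all θ₁, θ₂ ∈ [0,1], |v(θ₁) − v(θ₂)| ≤ 2C·|θ₁ − θ₂|. -/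
open MeasureTheory

/-- Lipschitz continuity of the TRO optimal value `v(θ)` in the size parameter `θ`:
`|v(θ₁) − v(θ₂)| ≤ 2C|θ₁ − θ₂|`. -/
theorem tro_optimal_value_lipschitz
    {Ξ X : Type*} [MeasurableSpace Ξ] [Nonempty X]
    (Phat : Measure Ξ) [IsProbabilityMeasure Phat]
    (𝒜 : Set (Measure Ξ)) (h𝒜ne : 𝒜.Nonempty)
    (h𝒜prob : ∀ Q ∈ 𝒜, IsProbabilityMeasure Q)
    (f : X → Ξ → ℝ)
    (hint0 : ∀ x, Integrable (f x) Phat)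
    (hint : ∀ x, ∀ Q ∈ 𝒜, Integrable (f x) Q)
    (C : ℝ) (hC : 0 ≤ C)
    (hb0 : ∀ x, |∫ ξ, f x ξ ∂Phat| ≤ C)
    (hb : ∀ x, ∀ Q ∈ 𝒜, |∫ ξ, f x ξ ∂Q| ≤ C)
    (v : ℝ → ℝ)
    (hv : ∀ θ, v θ = ⨅ x : X, ⨆ Q : 𝒜, ∫ ξ, f x ξ ∂(mix θ Phat (Q : Measure Ξ))) :
    ∀ θ₁ ∈ Set.Icc (0:ℝ) 1, ∀ θ₂ ∈ Set.Icc (0:ℝ) 1,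
      |v θ₁ - v θ₂| ≤ 2 * C * |θ₁ - θ₂| := by
  have key : ∀ θ ∈ Set.Icc (0:ℝ) 1, ∀ x, ∀ Q ∈ 𝒜, ∫ ξ, f x ξ ∂(mix θ Phat Q)
      = (1 - θ) * ∫ ξ, f x ξ ∂Phat + θ * ∫ ξ, f x ξ ∂Q := by
    intro θ hθ x Q hQ
    unfold mix
    rw [integral_add_measure ((hint0 x).smul_measure ENNReal.ofReal_ne_top)
      ((hint x Q hQ).smul_measure ENNReal.ofReal_ne_top), integral_smul_measure,
      integral_smul_measure, ENNReal.toReal_ofReal (by linarith [hθ.2]),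
      ENNReal.toReal_ofReal hθ.1, smul_eq_mul, smul_eq_mul]
  have : Nonempty 𝒜 := h𝒜ne.to_subtype
  have bd : ∀ θ ∈ Set.Icc (0:ℝ) 1, ∀ x, ∀ Q : 𝒜,
      |∫ ξ, f x ξ ∂(mix θ Phat (Q : Measure Ξ))| ≤ C := by
    intro θ hθ x Q
    rw [key θ hθ x Q Q.2]
    have h1 := abs_le.mp (hb0 x)
    have h2 := abs_le.mp (hb x Q Q.2)
    have h3 : 0 ≤ 1 - θ := by linarith [hθ.2]
    rw [abs_le]
    constructor
    · nlinarith [mul_le_mul_of_nonneg_left h1.1 h3, mul_le_mul_of_nonneg_left h2.1 hθ.1]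
    · nlinarith [mul_le_mul_of_nonneg_left h1.2 h3, mul_le_mul_of_nonneg_left h2.2 hθ.1]
  have bdA : ∀ θ ∈ Set.Icc (0:ℝ) 1, ∀ x,
      BddAbove (Set.range fun Q : 𝒜 => ∫ ξ, f x ξ ∂(mix θ Phat (Q : Measure Ξ))) := by
    intro θ hθ x
    refine ⟨C, ?_⟩
    rintro _ ⟨Q, rfl⟩
    exact (abs_le.mp (bd θ hθ x Q)).2
  have bdB : ∀ θ ∈ Set.Icc (0:ℝ) 1,
      BddBelow (Set.range fun x : X => ⨆ Q : 𝒜, ∫ ξ, f x ξ ∂(mix θ Phat (Q : Measure Ξ))) := by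
    intro θ hθ
    refine ⟨-C, ?_⟩
    rintro _ ⟨x, rfl⟩
    obtain ⟨Q⟩ := ‹Nonempty 𝒜›
    exact (abs_le.mp (bd θ hθ x Q)).1.trans (le_ciSup (bdA θ hθ x) Q)
  have one : ∀ θ₁ ∈ Set.Icc (0:ℝ) 1, ∀ θ₂ ∈ Set.Icc (0:ℝ) 1,
      v θ₁ - v θ₂ ≤ 2 * C * |θ₁ - θ₂| := by
    intro a ha b hb'
    suffices h : v a - 2 * C * |a - b| ≤ v b by linarith
    rw [hv b]
    refine le_ciInf fun x => ?_
    have h1 : v a ≤ ⨆ Q : 𝒜, ∫ ξ, f x ξ ∂(mix a Phat (Q : Measure Ξ)) := by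
      rw [hv a]; exact ciInf_le (bdB a ha) x
    have h2 : (⨆ Q : 𝒜, ∫ ξ, f x ξ ∂(mix a Phat (Q : Measure Ξ))) ≤
        (⨆ Q : 𝒜, ∫ ξ, f x ξ ∂(mix b Phat (Q : Measure Ξ))) + 2 * C * |a - b| := by
      refine ciSup_le fun Q => ?_
      have h3 := le_ciSup (bdA b hb' x) Q
      have h4 : ∫ ξ, f x ξ ∂(mix a Phat (Q : Measure Ξ)) -
          ∫ ξ, f x ξ ∂(mix b Phat (Q : Measure Ξ)) ≤ 2 * C * |a - b| := by
        rw [key a ha x Q Q.2, key b hb' x Q Q.2]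
        have h5 : |(∫ ξ, f x ξ ∂(Q : Measure Ξ)) - ∫ ξ, f x ξ ∂Phat| ≤ 2 * C := by
          have h1 := abs_le.mp (hb0 x)
          have h2 := abs_le.mp (hb x Q Q.2)
          rw [abs_le]
          constructor <;> linarith
        calc _ = ((∫ ξ, f x ξ ∂(Q : Measure Ξ)) - ∫ ξ, f x ξ ∂Phat) * (a - b) := by ring
          _ ≤ |((∫ ξ, f x ξ ∂(Q : Measure Ξ)) - ∫ ξ, f x ξ ∂Phat) * (a - b)| := le_abs_self _
          _ ≤ _ := by
            rw [abs_mul]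
            exact mul_le_mul_of_nonneg_right h5 (abs_nonneg _)
      linarith
    linarith
  intro a ha b hb'
  rw [abs_le]
  have h1 := one a ha b hb'
  have h2 := one b hb' a ha
  rw [abs_sub_comm] at h2
  constructor <;> linarith
end

section
/- Let Ξ be a measurable space, P̂ a probability measure on Ξ, 𝒫 a nonempty set of probability measures on Ξ, X a nonempty subset of a real normed vector space, and f : X × Ξ → ℝ such that for every x ∈ X the function f(x,·) is integrable with respect to P̂ and with respect to every Q ∈ 𝒫, and there is C ≥ 0 with |∫ f(x,·) dP̂| ≤ C and |∫ f(x,·) dQ| ≤ C for all x ∈ X, Q ∈ 𝒫. For θ ∈ [0,1] let 𝒫'_θ := {(1−θ)·P̂ + θ·Q : Q ∈ 𝒫}, v(θ) := inf_{x∈X} sup_{P∈𝒫'_θ} ∫ f(x,·) dP, and X̂(θ) := {x ∈ X : sup_{P∈𝒫'_θ} ∫ f(x,·) dP = v(θ)}. Fix θ₁, θ₂ ∈ [0,1] with X̂(θ₁) and X̂(θ₂) nonempty, and suppose a second-order growth condition holds at θ₁: there is τ > 0 such that sup_{P∈𝒫'_{θ₁}} ∫ f(x,·) dP ≥ v(θ₁)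 + τ·(inf_{y∈X̂(θ₁)} ‖x−y‖)² for all x ∈ X. Then sup_{x∈X̂(θ₂)} inf_{y∈X̂(θ₁)} ‖x−y‖ ≤ √(6C·τ⁻¹·|θ₁−θ₂|). -/
open MeasureTheory

/-- Hölder continuity (exponent 1/2) of the set of optimal solutions of the TRO model under
a second-order growth condition: `D(X̂(θ₂), X̂(θ₁)) ≤ √(6C·τ⁻¹·|θ₁ − θ₂|)`. -/
theorem tro_optimal_solutions_holder
    {Ξ E : Type*} [MeasurableSpace Ξ] [NormedAddCommGroup E] [NormedSpace ℝ E]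
    (X : Set E) (hXne : X.Nonempty)
    (Phat : Measure Ξ) [IsProbabilityMeasure Phat]
    (𝒜 : Set (Measure Ξ)) (h𝒜ne : 𝒜.Nonempty)
    (h𝒜prob : ∀ Q ∈ 𝒜, IsProbabilityMeasure Q)
    (f : E → Ξ → ℝ)
    (hint0 : ∀ x ∈ X, Integrable (f x) Phat)
    (hint : ∀ x ∈ X, ∀ Q ∈ 𝒜, Integrable (f x) Q)
    (C : ℝ) (hC : 0 ≤ C)
    (hb0 : ∀ x ∈ X, |∫ ξ, f x ξ ∂Phat| ≤ C)
    (hb : ∀ x ∈ X, ∀ Q ∈ 𝒜, |∫ ξ, f x ξ ∂Q| ≤ C)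
    (v : ℝ → ℝ) (Xhat : ℝ → Set E)
    (hv : ∀ θ, v θ = ⨅ x : X, ⨆ Q : 𝒜, ∫ ξ, f (x : E) ξ ∂(mix θ Phat (Q : Measure Ξ)))
    (hXhat : ∀ θ, Xhat θ =
      {x ∈ X | (⨆ Q : 𝒜, ∫ ξ, f x ξ ∂(mix θ Phat (Q : Measure Ξ))) = v θ})
    (θ₁ θ₂ : ℝ) (hθ₁ : θ₁ ∈ Set.Icc (0:ℝ) 1) (hθ₂ : θ₂ ∈ Set.Icc (0:ℝ) 1)
    (hne1 : (Xhat θ₁).Nonempty) (hne2 : (Xhat θ₂).Nonempty)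
    (τ : ℝ) (hτ : 0 < τ)
    (growth : ∀ x ∈ X, v θ₁ + τ * (⨅ y : Xhat θ₁, ‖x - (y : E)‖) ^ 2 ≤
      ⨆ Q : 𝒜, ∫ ξ, f x ξ ∂(mix θ₁ Phat (Q : Measure Ξ))) :
    (⨆ x : Xhat θ₂, ⨅ y : Xhat θ₁, ‖(x : E) - (y : E)‖) ≤
      Real.sqrt (6 * C * τ⁻¹ * |θ₁ - θ₂|) := by
  have hI : ∀ θ ∈ Set.Icc (0:ℝ) 1, ∀ x ∈ X, ∀ Q ∈ 𝒜,
      ∫ ξ, f x ξ ∂(mix θ Phat Q) = (1 - θ) * ∫ ξ, f x ξ ∂Phat + θ * ∫ ξ, f x ξ ∂Q := by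
    intro θ hθ x hx Q hQ
    unfold mix
    rw [integral_add_measure ((hint0 x hx).smul_measure ENNReal.ofReal_ne_top)
      ((hint x hx Q hQ).smul_measure ENNReal.ofReal_ne_top),
      integral_smul_measure, integral_smul_measure,
      ENNReal.toReal_ofReal (by linarith [hθ.2]), ENNReal.toReal_ofReal hθ.1]
    simp only [smul_eq_mul]
  have hbd : ∀ θ ∈ Set.Icc (0:ℝ) 1, ∀ x ∈ X, ∀ Q ∈ 𝒜,
      |∫ ξ, f x ξ ∂(mix θ Phat Q)| ≤ C := by
    intro θ hθ x hx Q hQ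
    rw [hI θ hθ x hx Q hQ]
    have h1 := abs_le.1 (hb0 x hx)
    have h2 := abs_le.1 (hb x hx Q hQ)
    have h3 := hθ.1
    have h4 : 0 ≤ 1 - θ := by linarith [hθ.2]
    rw [abs_le]
    constructor <;> nlinarith [h1.1, h1.2, h2.1, h2.2]
  have : Nonempty 𝒜 := h𝒜ne.to_subtype
  have : Nonempty X := hXne.to_subtype
  have hBA : ∀ θ ∈ Set.Icc (0:ℝ) 1, ∀ x ∈ X,
      BddAbove (Set.range fun Q : 𝒜 => ∫ ξ, f x ξ ∂(mix θ Phat (Q : Measure Ξ))) := by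
    intro θ hθ x hx
    refine ⟨C, ?_⟩
    rintro _ ⟨Q, rfl⟩
    exact (abs_le.1 (hbd θ hθ x hx Q Q.2)).2
  have hK : ∀ θ ∈ Set.Icc (0:ℝ) 1, ∀ θ' ∈ Set.Icc (0:ℝ) 1, ∀ x ∈ X,
      (⨆ Q : 𝒜, ∫ ξ, f x ξ ∂(mix θ Phat (Q : Measure Ξ))) ≤
      (⨆ Q : 𝒜, ∫ ξ, f x ξ ∂(mix θ' Phat (Q : Measure Ξ))) + 2 * C * |θ - θ'| := by
    intro θ hθ θ' hθ' x hx
    refine ciSup_le fun Q => ?_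
    have h0 := le_ciSup (hBA θ' hθ' x hx) Q
    rw [hI θ' hθ' x hx Q Q.2] at h0
    rw [hI θ hθ x hx Q Q.2]
    have h1 := abs_le.1 (hb0 x hx)
    have h2 := abs_le.1 (hb x hx Q Q.2)
    have h3 : |(∫ ξ, f x ξ ∂(Q : Measure Ξ)) - ∫ ξ, f x ξ ∂Phat| ≤ 2 * C := by
      rw [abs_le]; constructor <;> linarith [h1.1, h1.2, h2.1, h2.2]
    have h4 := mul_le_mul_of_nonneg_right h3 (abs_nonneg (θ - θ'))
    rw [← abs_mul] at h4
    have h5 := le_trans (le_abs_self _) h4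
    linarith
  have hvle : ∀ x ∈ X, v θ₂ ≤ ⨆ Q : 𝒜, ∫ ξ, f x ξ ∂(mix θ₂ Phat (Q : Measure Ξ)) := by
    intro x hx
    rw [hv]
    refine ciInf_le (f := fun x : X =>
      ⨆ Q : 𝒜, ∫ ξ, f (x : E) ξ ∂(mix θ₂ Phat (Q : Measure Ξ))) ⟨-C, ?_⟩ ⟨x, hx⟩
    rintro _ ⟨y, rfl⟩
    obtain ⟨Q⟩ := ‹Nonempty 𝒜›
    exact le_trans (abs_le.1 (hbd θ₂ hθ₂ y y.2 Q Q.2)).1 (le_ciSup (hBA θ₂ hθ₂ y y.2) Q)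
  have : Nonempty (Xhat θ₂) := hne2.to_subtype
  obtain ⟨x₁, hx₁⟩ := hne1
  rw [hXhat] at hx₁
  have hv21 : v θ₂ ≤ v θ₁ + 2 * C * |θ₁ - θ₂| := by
    have h1 := hvle x₁ hx₁.1
    have h2 := hK θ₂ hθ₂ θ₁ hθ₁ x₁ hx₁.1
    rw [hx₁.2, abs_sub_comm] at h2
    linarith
  refine ciSup_le fun x => ?_
  have hx := (Set.ext_iff.1 (hXhat θ₂) (x : E)).1 x.2
  have h1 := growth x hx.1
  have h2 := hK θ₁ hθ₁ θ₂ hθ₂ x hx.1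
  rw [hx.2] at h2
  apply Real.le_sqrt_of_sq_le
  have h3 : 0 ≤ C * |θ₁ - θ₂| := by positivity
  have h4 : τ * (⨅ y : Xhat θ₁, ‖(x : E) - (y : E)‖) ^ 2 ≤ 6 * C * |θ₁ - θ₂| := by linarith
  have h5 : 6 * C * τ⁻¹ * |θ₁ - θ₂| = (6 * C * |θ₁ - θ₂|) / τ := by
    rw [div_eq_mul_inv]; ring
  rw [h5, le_div_iff₀ hτ]
  linarith
end

section
/- Let Ξ be a measurable space, P̂ a probability measure on Ξ, 𝒫 a nonempty set of probability measures on Ξ, X a nonempty set, and f : X × Ξ → ℝ such that for every x ∈ X the function f(x,·) is integrable with respect to P̂ and with respect to every Q ∈ 𝒫, and there is C ≥ 0 with |∫ f(x,·) dP̂| ≤ C and |∫ f(x,·) dQ| ≤ C for all x ∈ X, Q ∈ 𝒫. For θ ∈ [0,1] let 𝒫'_θ := {(1−θ)·P̂ + θ·Q : Q ∈ 𝒫} and v(θ) := inf_{x∈X} sup_{P∈𝒫'_θ} ∫ f(x,·) dP. Then: (i) v is concave on [0,1]; and (ii) for every θ ∈ [0,1], (1−θ)·v(0) + θ·v(1)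 ≤ v(θ) ≤ (1−θ)·v(0) + θ·v(1) + 4C·θ(1−θ). -/
open MeasureTheory

/-- The TRO optimal value `v` is concave on `[0,1]` and satisfies
`(1−θ)v(0) + θv(1) ≤ v(θ) ≤ (1−θ)v(0) + θv(1) + 4Cθ(1−θ)`. -/
theorem tro_optimal_value_concave_and_expansion
    {Ξ X : Type*} [MeasurableSpace Ξ] [Nonempty X]
    (Phat : Measure Ξ) [IsProbabilityMeasure Phat]
    (𝒜 : Set (Measure Ξ)) (h𝒜ne : 𝒜.Nonempty)
    (h𝒜prob : ∀ Q ∈ 𝒜, IsProbabilityMeasure Q)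
    (f : X → Ξ → ℝ)
    (hint0 : ∀ x, Integrable (f x) Phat)
    (hint : ∀ x, ∀ Q ∈ 𝒜, Integrable (f x) Q)
    (C : ℝ) (hC : 0 ≤ C)
    (hb0 : ∀ x, |∫ ξ, f x ξ ∂Phat| ≤ C)
    (hb : ∀ x, ∀ Q ∈ 𝒜, |∫ ξ, f x ξ ∂Q| ≤ C)
    (v : ℝ → ℝ)
    (hv : ∀ θ, v θ = ⨅ x : X, ⨆ Q : 𝒜, ∫ ξ, f x ξ ∂(mix θ Phat (Q : Measure Ξ))) :
    ConcaveOn ℝ (Set.Icc (0:ℝ) 1) v ∧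
      ∀ θ ∈ Set.Icc (0:ℝ) 1,
        (1 - θ) * v 0 + θ * v 1 ≤ v θ ∧
        v θ ≤ (1 - θ) * v 0 + θ * v 1 + 4 * C * θ * (1 - θ) := by
  classical
  haveI : Nonempty 𝒜 := h𝒜ne.to_subtype
  set a : X → ℝ := fun x => ∫ ξ, f x ξ ∂Phat with ha
  set b : X → ℝ := fun x => ⨆ Q : 𝒜, ∫ ξ, f x ξ ∂(Q : Measure Ξ) with hbdef
  have hbdd : ∀ x, BddAbove (Set.range fun Q : 𝒜 => ∫ ξ, f x ξ ∂(Q : Measure Ξ)) := by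
    intro x
    refine ⟨C, ?_⟩
    rintro _ ⟨Q, rfl⟩
    exact (abs_le.mp (hb x Q Q.2)).2
  have a1 : ∀ x, a x ≤ C := fun x => (abs_le.mp (hb0 x)).2
  have a2 : ∀ x, -C ≤ a x := fun x => (abs_le.mp (hb0 x)).1
  have b1 : ∀ x, b x ≤ C := fun x => ciSup_le fun Q => (abs_le.mp (hb x Q Q.2)).2
  have b2 : ∀ x, -C ≤ b x := by
    intro x
    obtain ⟨Q⟩ := (inferInstance : Nonempty 𝒜)
    exact (abs_le.mp (hb x Q Q.2)).1.trans (le_ciSup (hbdd x) Q)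
  have key : ∀ θ ∈ Set.Icc (0:ℝ) 1, v θ = ⨅ x, ((1 - θ) * a x + θ * b x) := by
    intro θ hθ
    rw [hv]
    congr 1
    funext x
    have h1 : ∀ Q : 𝒜, ∫ ξ, f x ξ ∂(mix θ Phat (Q : Measure Ξ))
        = (1 - θ) * a x + θ * ∫ ξ, f x ξ ∂(Q : Measure Ξ) := by
      intro Q
      unfold mix
      rw [integral_add_measure ((hint0 x).smul_measure ENNReal.ofReal_ne_top)
        ((hint x Q Q.2).smul_measure ENNReal.ofReal_ne_top), integral_smul_measure,
        integral_smul_measure, ENNReal.toReal_ofReal (by linarith [hθ.2]),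
        ENNReal.toReal_ofReal hθ.1]
      simp [ha]
    simp_rw [h1]
    rw [hbdef]
    simp only []
    rw [Real.mul_iSup_of_nonneg hθ.1]
    rw [add_ciSup]
    refine ⟨θ * C, ?_⟩
    rintro _ ⟨Q, rfl⟩
    exact mul_le_mul_of_nonneg_left (abs_le.mp (hb x Q Q.2)).2 hθ.1
  have hle : ∀ θ ∈ Set.Icc (0:ℝ) 1, ∀ x, v θ ≤ (1 - θ) * a x + θ * b x := by
    intro θ hθ x
    rw [key θ hθ]
    refine ciInf_le ⟨-C, ?_⟩ x
    rintro _ ⟨y, rfl⟩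
    have := hθ.1
    have := hθ.2
    show -C ≤ (1 - θ) * a y + θ * b y
    nlinarith [mul_nonneg (sub_nonneg.mpr hθ.2) (sub_nonneg.mpr (a2 y)),
      mul_nonneg hθ.1 (sub_nonneg.mpr (b2 y))]
  have h0 : (0:ℝ) ∈ Set.Icc (0:ℝ) 1 := by simp
  have h1 : (1:ℝ) ∈ Set.Icc (0:ℝ) 1 := by simp
  have hconc : ConcaveOn ℝ (Set.Icc (0:ℝ) 1) v := by
    refine ⟨convex_Icc 0 1, ?_⟩
    intro s hs t ht p q hp hq hpq
    rw [key _ (convex_Icc (0:ℝ) 1 hs ht hp hq hpq)]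
    refine le_ciInf fun x => ?_
    have e1 := mul_le_mul_of_nonneg_left (hle s hs x) hp
    have e2 := mul_le_mul_of_nonneg_left (hle t ht x) hq
    obtain rfl : q = 1 - p := by linarith
    simp only [smul_eq_mul]
    nlinarith
  have v0 : v 0 = ⨅ x, a x := by rw [key 0 h0]; simp
  have v1 : v 1 = ⨅ x, b x := by rw [key 1 h1]; simp
  have v0l : -C ≤ v 0 := by rw [v0]; exact le_ciInf a2
  have v1l : -C ≤ v 1 := by rw [v1]; exact le_ciInf b2
  refine ⟨hconc, fun θ hθ => ⟨?_, ?_⟩⟩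
  · have := hconc.2 h0 h1 (sub_nonneg.mpr hθ.2) hθ.1 (by ring)
    simpa using this
  · have hn : 0 ≤ 1 - θ := sub_nonneg.mpr hθ.2
    have hθ0 := hθ.1
    rcases le_total θ (1/2) with h | h
    · have e : v θ - θ * v 1 - 2 * C * θ ≤ (1 - θ) * v 0 := by
        rw [v0, Real.mul_iInf_of_nonneg hn]
        refine le_ciInf fun x => ?_
        have := hle θ hθ x
        nlinarith [mul_nonneg hθ0 (sub_nonneg.mpr (b1 x)),
          mul_nonneg hθ0 (sub_nonneg.mpr v1l)]
      nlinarith [mul_nonneg (mul_nonneg hC hθ0) (sub_nonneg.mpr h)]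
    · have e : v θ - (1 - θ) * v 0 - 2 * C * (1 - θ) ≤ θ * v 1 := by
        rw [v1, Real.mul_iInf_of_nonneg hθ0]
        refine le_ciInf fun x => ?_
        have := hle θ hθ x
        nlinarith [mul_nonneg hn (sub_nonneg.mpr (a1 x)),
          mul_nonneg hn (sub_nonneg.mpr v0l)]
      nlinarith [mul_nonneg (mul_nonneg hC hn) (sub_nonneg.mpr h)]
end

section
/- Let Ξ be a measurable space, P̂ a probability measure on Ξ, 𝒫 a nonempty set of probability measures on Ξ, X a nonempty subset of a real normed vector space, and f : X × Ξ → ℝ such that for every x ∈ X the function f(x,·) is integrable with respect to P̂ and with respect to every Q ∈ 𝒫, and there is C ≥ 0 with |∫ f(x,·) dP̂| ≤ C and |∫ f(x,·) dQ| ≤ C for all x ∈ X, Q ∈ 𝒫. For θ ∈ [0,1] let 𝒫'_θ := {(1−θ)·P̂ + θ·Q : Q ∈ 𝒫}, v(θ) := inf_{x∈X} sup_{P∈𝒫'_θ} ∫ f(x,·) dP, and X̂(θ) := {x ∈ X : sup_{P∈𝒫'_θ} ∫ f(x,·) dP = v(θ)}. Fix θ ∈ [0,1] and suppose X̂(0),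 X̂(1), X̂(θ) are nonempty and that for some τ > 0 the second-order growth condition holds at both endpoints: sup_{P∈𝒫'_0} ∫ f(x,·) dP ≥ v(0) + τ·(inf_{y∈X̂(0)} ‖x−y‖)² and sup_{P∈𝒫'_1} ∫ f(x,·) dP ≥ v(1) + τ·(inf_{y∈X̂(1)} ‖x−y‖)² for all x ∈ X. Then sup_{x∈X̂(θ)} inf_{z∈S} ‖x−z‖ ≤ √(6C·τ⁻¹·θ(1−θ))·(√θ + √(1−θ)), where S := {(1−θ)x' + θx'' : x' ∈ X̂(0), x'' ∈ X̂(1)} is the set of convex combinations of SAA and DRO optimal solutions. -/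
open MeasureTheory

set_option maxHeartbeats 2000000 in
/-- The deviation of the set of TRO optimal solutions `X̂(θ)` from the set of convex
combinations of SAA and DRO optimal solutions is at most
`√(6C·τ⁻¹·θ(1−θ))·(√θ + √(1−θ))`. -/
theorem tro_solutions_vs_convex_combination
    {Ξ E : Type*} [MeasurableSpace Ξ] [NormedAddCommGroup E] [NormedSpace ℝ E]
    (X : Set E) (hXne : X.Nonempty)
    (Phat : Measure Ξ) [IsProbabilityMeasure Phat]
    (𝒜 : Set (Measure Ξ)) (h𝒜ne : 𝒜.Nonempty)
    (h𝒜prob : ∀ Q ∈ 𝒜, IsProbabilityMeasure Q)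
    (f : E → Ξ → ℝ)
    (hint0 : ∀ x ∈ X, Integrable (f x) Phat)
    (hint : ∀ x ∈ X, ∀ Q ∈ 𝒜, Integrable (f x) Q)
    (C : ℝ) (hC : 0 ≤ C)
    (hb0 : ∀ x ∈ X, |∫ ξ, f x ξ ∂Phat| ≤ C)
    (hb : ∀ x ∈ X, ∀ Q ∈ 𝒜, |∫ ξ, f x ξ ∂Q| ≤ C)
    (v : ℝ → ℝ) (Xhat : ℝ → Set E)
    (hv : ∀ θ, v θ = ⨅ x : X, ⨆ Q : 𝒜, ∫ ξ, f (x : E) ξ ∂(mix θ Phat (Q : Measure Ξ)))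
    (hXhat : ∀ θ, Xhat θ =
      {x ∈ X | (⨆ Q : 𝒜, ∫ ξ, f x ξ ∂(mix θ Phat (Q : Measure Ξ))) = v θ})
    (θ : ℝ) (hθ : θ ∈ Set.Icc (0:ℝ) 1)
    (hne0 : (Xhat 0).Nonempty) (hne1 : (Xhat 1).Nonempty) (hneθ : (Xhat θ).Nonempty)
    (τ : ℝ) (hτ : 0 < τ)
    (growth0 : ∀ x ∈ X, v 0 + τ * (⨅ y : Xhat 0, ‖x - (y : E)‖) ^ 2 ≤
      ⨆ Q : 𝒜, ∫ ξ, f x ξ ∂(mix 0 Phat (Q : Measure Ξ)))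
    (growth1 : ∀ x ∈ X, v 1 + τ * (⨅ y : Xhat 1, ‖x - (y : E)‖) ^ 2 ≤
      ⨆ Q : 𝒜, ∫ ξ, f x ξ ∂(mix 1 Phat (Q : Measure Ξ)))
    (S : Set E)
    (hS : S = {z | ∃ x' ∈ Xhat 0, ∃ x'' ∈ Xhat 1, z = (1 - θ) • x' + θ • x''}) :
    (⨆ x : Xhat θ, ⨅ z : S, ‖(x : E) - (z : E)‖) ≤
      Real.sqrt (6 * C * τ⁻¹ * θ * (1 - θ)) * (Real.sqrt θ + Real.sqrt (1 - θ)) := by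
  obtain ⟨hθ0, hθ1⟩ := hθ
  have : Nonempty 𝒜 := h𝒜ne.to_subtype
  have : Nonempty X := hXne.to_subtype
  have : Nonempty (Xhat 0) := hne0.to_subtype
  have : Nonempty (Xhat 1) := hne1.to_subtype
  have : Nonempty (Xhat θ) := hneθ.to_subtype
  set a : E → ℝ := fun x => ∫ ξ, f x ξ ∂Phat with ha
  set b : E → ℝ := fun x => ⨆ Q : 𝒜, ∫ ξ, f x ξ ∂(Q : Measure Ξ) with hbdef
  have hbdd : ∀ x ∈ X, BddAbove (Set.range fun Q : 𝒜 => ∫ ξ, f x ξ ∂(Q : Measure Ξ)) := by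
    intro x hx
    refine ⟨C, ?_⟩
    rintro _ ⟨Q, rfl⟩
    exact (abs_le.1 (hb x hx Q Q.2)).2
  have hbC : ∀ x ∈ X, -C ≤ b x ∧ b x ≤ C := by
    intro x hx
    refine ⟨?_, ciSup_le fun Q => (abs_le.1 (hb x hx Q Q.2)).2⟩
    obtain ⟨Q⟩ := (inferInstance : Nonempty 𝒜)
    exact (abs_le.1 (hb x hx Q Q.2)).1.trans (le_ciSup (hbdd x hx) Q)
  have haC : ∀ x ∈ X, -C ≤ a x ∧ a x ≤ C := fun x hx => abs_le.1 (hb0 x hx)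
  have hG : ∀ t : ℝ, 0 ≤ t → t ≤ 1 → ∀ x ∈ X,
      (⨆ Q : 𝒜, ∫ ξ, f x ξ ∂(mix t Phat (Q : Measure Ξ))) = (1 - t) * a x + t * b x := by
    intro t h0 h1 x hx
    have h1' : 0 ≤ 1 - t := by linarith
    have e : ∀ Q : 𝒜, ∫ ξ, f x ξ ∂(mix t Phat (Q : Measure Ξ))
        = (1 - t) * a x + t * ∫ ξ, f x ξ ∂(Q : Measure Ξ) := by
      intro Q
      unfold mix
      rw [integral_add_measure ((hint0 x hx).smul_measure ENNReal.ofReal_ne_top)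
        ((hint x hx Q Q.2).smul_measure ENNReal.ofReal_ne_top),
        integral_smul_measure, integral_smul_measure, ENNReal.toReal_ofReal h0,
        ENNReal.toReal_ofReal h1']
      simp [ha]
    simp_rw [e]
    have hbd2 : BddAbove (Set.range fun Q : 𝒜 => t * ∫ ξ, f x ξ ∂(Q : Measure Ξ)) := by
      refine ⟨t * b x, ?_⟩
      rintro _ ⟨Q, rfl⟩
      exact mul_le_mul_of_nonneg_left (le_ciSup (hbdd x hx) Q) h0
    rw [← add_ciSup hbd2, hbdef, Real.mul_iSup_of_nonneg h0]
  have hvle : ∀ t : ℝ, 0 ≤ t → t ≤ 1 → ∀ x ∈ X, v t ≤ (1 - t) * a x + t * b x := by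
    intro t h0 h1 x hx
    rw [hv t, ← hG t h0 h1 x hx]
    refine ciInf_le (f := fun x : X =>
      ⨆ Q : 𝒜, ∫ ξ, f (x : E) ξ ∂(mix t Phat (Q : Measure Ξ))) ⟨-C, ?_⟩ ⟨x, hx⟩
    rintro _ ⟨y, rfl⟩
    simp only
    rw [hG t h0 h1 y y.2]
    nlinarith [(haC y y.2).1, (hbC y y.2).1]
  have hmem : ∀ t : ℝ, 0 ≤ t → t ≤ 1 → ∀ x ∈ Xhat t,
      x ∈ X ∧ (1 - t) * a x + t * b x = v t := by
    intro t h0 h1 x hx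
    rw [hXhat t] at hx
    exact ⟨hx.1, by rw [← hG t h0 h1 x hx.1]; exact hx.2⟩
  refine ciSup_le fun x => ?_
  obtain ⟨hxX, hxv⟩ := hmem θ hθ0 hθ1 x x.2
  set d0 := ⨅ y : Xhat 0, ‖(x : E) - (y : E)‖ with hd0
  set d1 := ⨅ y : Xhat 1, ‖(x : E) - (y : E)‖ with hd1
  have hd0n : 0 ≤ d0 := Real.iInf_nonneg fun _ => norm_nonneg _
  have hd1n : 0 ≤ d1 := Real.iInf_nonneg fun _ => norm_nonneg _
  have g0 := growth0 x hxX
  have g1 := growth1 x hxX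
  rw [hG 0 le_rfl zero_le_one x hxX] at g0
  rw [hG 1 zero_le_one le_rfl x hxX] at g1
  have hm : (⨅ z : S, ‖(x : E) - (z : E)‖) ≤ (1 - θ) * d0 + θ * d1 := by
    refine le_of_forall_pos_le_add fun ε hε => ?_
    obtain ⟨y0, hy0⟩ := exists_lt_of_ciInf_lt (lt_add_of_pos_right d0 hε)
    obtain ⟨y1, hy1⟩ := exists_lt_of_ciInf_lt (lt_add_of_pos_right d1 hε)
    have hz : (1 - θ) • (y0 : E) + θ • (y1 : E) ∈ S := by
      rw [hS]; exact ⟨y0, y0.2, y1, y1.2, rfl⟩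
    have h1 : (⨅ z : S, ‖(x : E) - (z : E)‖) ≤
        ‖(x : E) - ((1 - θ) • (y0 : E) + θ • (y1 : E))‖ :=
      ciInf_le (f := fun z : S => ‖(x : E) - (z : E)‖)
        ⟨0, by rintro _ ⟨z, rfl⟩; exact norm_nonneg _⟩ ⟨_, hz⟩
    have h2 : (x : E) - ((1 - θ) • (y0 : E) + θ • (y1 : E))
        = (1 - θ) • ((x : E) - y0) + θ • ((x : E) - y1) := by module
    have h3 := norm_add_le ((1 - θ) • ((x : E) - (y0 : E))) (θ • ((x : E) - (y1 : E)))
    rw [norm_smul, norm_smul, Real.norm_of_nonneg hθ0,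
      Real.norm_of_nonneg (sub_nonneg.2 hθ1)] at h3
    rw [h2] at h1
    nlinarith [mul_le_mul_of_nonneg_left hy0.le (sub_nonneg.2 hθ1),
      mul_le_mul_of_nonneg_left hy1.le hθ0]
  obtain ⟨p, hp⟩ := hne0
  obtain ⟨q, hq⟩ := hne1
  obtain ⟨hpX, hpv⟩ := hmem 0 le_rfl zero_le_one p hp
  obtain ⟨hqX, hqv⟩ := hmem 1 zero_le_one le_rfl q hq
  have k1 := hvle θ hθ0 hθ1 p hpX
  have k2 := hvle θ hθ0 hθ1 q hqX
  have hpa : a p = v 0 := by linarith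
  have hqb : b q = v 1 := by linarith
  have c1 := hbC p hpX
  have c2 := hbC q hqX
  have c3 := haC p hpX
  have c4 := haC q hqX
  have hθ1' : 0 ≤ 1 - θ := sub_nonneg.2 hθ1
  have D0 : τ * ((1 - θ) * d0 ^ 2 + θ * d1 ^ 2) ≤ v θ - (1 - θ) * v 0 - θ * v 1 := by
    nlinarith [mul_le_mul_of_nonneg_left g0 hθ1', mul_le_mul_of_nonneg_left g1 hθ0]
  have D1 : v θ - (1 - θ) * v 0 - θ * v 1 ≤ θ * (2 * C) := by
    rw [hpa] at k1
    have : b p - v 1 ≤ 2 * C := by linarith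
    nlinarith [mul_le_mul_of_nonneg_left this hθ0]
  have D2 : v θ - (1 - θ) * v 0 - θ * v 1 ≤ (1 - θ) * (2 * C) := by
    rw [hqb] at k2
    have : a q - v 0 ≤ 2 * C := by linarith
    nlinarith [mul_le_mul_of_nonneg_left this hθ1']
  have D3 : v θ - (1 - θ) * v 0 - θ * v 1 ≤ 6 * C * θ * (1 - θ) := by
    have hCt : 0 ≤ C * θ := mul_nonneg hC hθ0
    have hCt' : 0 ≤ C * (1 - θ) := mul_nonneg hC hθ1'
    rcases le_total θ (1/2) with h | h
    · nlinarith [mul_nonneg hCt (by linarith : (0:ℝ) ≤ 1/2 - θ)]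
    · nlinarith [mul_nonneg hCt' (by linarith : (0:ℝ) ≤ θ - 1/2)]
  have J : ((1 - θ) * d0 + θ * d1) ^ 2 ≤ (1 - θ) * d0 ^ 2 + θ * d1 ^ 2 := by
    nlinarith [mul_nonneg (mul_nonneg hθ0 hθ1') (sq_nonneg (d0 - d1))]
  have K : (1 - θ) * d0 ^ 2 + θ * d1 ^ 2 ≤ 6 * C * τ⁻¹ * θ * (1 - θ) := by
    have : 6 * C * τ⁻¹ * θ * (1 - θ) = (6 * C * θ * (1 - θ)) / τ := by
      rw [div_eq_mul_inv]; ring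
    rw [this, le_div_iff₀ hτ]
    linarith
  have L : (1 - θ) * d0 + θ * d1 ≤ Real.sqrt (6 * C * τ⁻¹ * θ * (1 - θ)) :=
    Real.le_sqrt_of_sq_le (J.trans K)
  have M : 1 ≤ Real.sqrt θ + Real.sqrt (1 - θ) := by
    have m1 : θ ≤ Real.sqrt θ := Real.le_sqrt_of_sq_le (by nlinarith)
    have m2 : 1 - θ ≤ Real.sqrt (1 - θ) := Real.le_sqrt_of_sq_le (by nlinarith)
    linarith
  exact (hm.trans L).trans (le_mul_of_one_le_right (Real.sqrt_nonneg _) M)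
end

section
/- Let g : [0,1] → ℝ be continuous and concave, and let v* ∈ ℝ satisfy g(0) ≤ v* ≤ g(1). Then there exists θᵘ ∈ [0,1] such that g(θᵘ) = v* and, for every θ ∈ [0, θᵘ], |g(θ) − v*| ≤ |g(0) − v*|. -/
/-- For a continuous concave `g : [0,1] → ℝ` with `g(0) ≤ v* ≤ g(1)` there is
`θᵘ ∈ [0,1]` with `g(θᵘ) = v*` and `|g(θ) − v*| ≤ |g(0) − v*|` for all `θ ∈ [0,θᵘ]`. -/
theorem concave_unbiased_and_bias_reduction
    (g : ℝ → ℝ) (hgc : ContinuousOn g (Set.Icc (0:ℝ) 1))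
    (hconc : ConcaveOn ℝ (Set.Icc (0:ℝ) 1) g)
    (vstar : ℝ) (h0 : g 0 ≤ vstar) (h1 : vstar ≤ g 1) :
    ∃ θu ∈ Set.Icc (0:ℝ) 1, g θu = vstar ∧
      ∀ θ ∈ Set.Icc (0:ℝ) θu, |g θ - vstar| ≤ |g 0 - vstar| := by
  have hS : IsCompact (Set.Icc (0:ℝ) 1 ∩ g ⁻¹' {vstar}) :=
    isCompact_Icc.of_isClosed_subset
      (hgc.preimage_isClosed_of_isClosed isClosed_Icc isClosed_singleton) Set.inter_subset_left
  have hne : (Set.Icc (0:ℝ) 1 ∩ g ⁻¹' {vstar}).Nonempty := by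
    obtain ⟨x, hx, hgx⟩ := intermediate_value_Icc zero_le_one hgc ⟨h0, h1⟩
    exact ⟨x, hx, hgx⟩
  obtain ⟨u, ⟨hu, hgu⟩, hmin⟩ := hS.exists_isLeast hne
  have hgu : g u = vstar := hgu
  refine ⟨u, hu, hgu, fun t ht => ?_⟩
  have hlow : g 0 ≤ g t := by
    have h := hconc.min_le_of_mem_Icc (Set.left_mem_Icc.2 zero_le_one) hu ht
    rwa [hgu, min_eq_left h0] at h
  have hup : g t ≤ vstar := by
    by_contra hlt
    push Not at hlt
    obtain ⟨x, hx, hgx⟩ := intermediate_value_Icc ht.1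
      (hgc.mono (Set.Icc_subset_Icc le_rfl (ht.2.trans hu.2))) ⟨h0, hlt.le⟩
    have hux : u ≤ x := hmin ⟨⟨hx.1, hx.2.trans (ht.2.trans hu.2)⟩, hgx⟩
    have htu : t = u := le_antisymm ht.2 (hux.trans hx.2)
    rw [htu, hgu] at hlt
    exact lt_irrefl _ hlt
  rw [abs_of_nonpos (by linarith), abs_of_nonpos (by linarith)]
  linarith
end

section
/- Let Ξ be a measurable space, X a nonempty subset of a real normed vector space, and f : X × Ξ → ℝ. Let 𝒫₁ and 𝒫₂ be nonempty sets of probability measures on Ξ such that f(x,·) is integrable with respect to every Q ∈ 𝒫₁ ∪ 𝒫₂ for every x ∈ X, with a constant C ≥ 0 such that |∫ f(x,·) dQ| ≤ C for all x ∈ X and Q ∈ 𝒫₁ ∪ 𝒫₂. For i = 1, 2 let v_i := inf_{x∈X} sup_{Q∈𝒫_i} ∫ f(x,·) dQ and X*_i := {x ∈ X : sup_{Q∈𝒫_i} ∫ f(x,·) dQ = v_i}, and assume X*₁ and X*₂ are nonempty. Suppose the second-order growth condition holds at X*₁: there is τ > 0 such that sup_{Q∈𝒫₁} ∫ f(x,·)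 dQ ≥ v₁ + τ·(inf_{y∈X*₁} ‖x−y‖)² for all x ∈ X. Then sup_{x∈X*₂} inf_{y∈X*₁} ‖x−y‖ ≤ √(3·ℍ(𝒫₁,𝒫₂)/τ). -/
open MeasureTheory

/-- The pseudometric `𝕕(P₁,P₂) = sup_{x ∈ X} |∫ f(x,·) dP₁ − ∫ f(x,·) dP₂|`,
the supremum being taken over the decision set `X`. -/
noncomputable def pseudoDist {Ξ E : Type*} [MeasurableSpace Ξ] (X : Set E) (f : E → Ξ → ℝ)
    (P₁ P₂ : Measure Ξ) : ℝ :=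
  ⨆ x : X, |(∫ ξ, f (x : E) ξ ∂P₁) - ∫ ξ, f (x : E) ξ ∂P₂|

/-- The Hausdorff distance `ℍ(𝒫₁,𝒫₂)` between two sets of measures under `pseudoDist`. -/
noncomputable def hausdorffDistSets {Ξ E : Type*} [MeasurableSpace Ξ] (X : Set E)
    (f : E → Ξ → ℝ) (𝒜₁ 𝒜₂ : Set (Measure Ξ)) : ℝ :=
  max (⨆ Q : 𝒜₁, ⨅ P : 𝒜₂, pseudoDist X f (Q : Measure Ξ) (P : Measure Ξ))
      (⨆ Q : 𝒜₂, ⨅ P : 𝒜₁, pseudoDist X f (Q : Measure Ξ) (P : Measure Ξ))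

/-- Robust values differ by at most the one-sided deviation of the ambiguity sets. -/
lemma sup_le_sup_add_dev {Ξ E : Type*} [MeasurableSpace Ξ] (X : Set E) (f : E → Ξ → ℝ)
    (A B : Set (Measure Ξ)) (hA : A.Nonempty) (hB : B.Nonempty) (C : ℝ)
    (hbA : ∀ x ∈ X, ∀ Q ∈ A, |∫ ξ, f x ξ ∂Q| ≤ C)
    (hbB : ∀ x ∈ X, ∀ Q ∈ B, |∫ ξ, f x ξ ∂Q| ≤ C) (x : E) (hx : x ∈ X) :
    (⨆ Q : A, ∫ ξ, f x ξ ∂(Q : Measure Ξ)) ≤ (⨆ Q : B, ∫ ξ, f x ξ ∂(Q : Measure Ξ)) +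
      ⨆ Q : A, ⨅ P : B, pseudoDist X f (Q : Measure Ξ) (P : Measure Ξ) := by
  haveI := hA.to_subtype
  haveI := hB.to_subtype
  haveI : Nonempty X := ⟨⟨x, hx⟩⟩
  have hd0 : ∀ P Q : Measure Ξ, 0 ≤ pseudoDist X f P Q := fun P Q =>
    Real.iSup_nonneg fun _ => abs_nonneg _
  have hterm : ∀ Q ∈ A, ∀ P ∈ B, ∀ z ∈ X,
      |(∫ ξ, f z ξ ∂Q) - ∫ ξ, f z ξ ∂P| ≤ 2 * C := by
    intro Q hQ P hP z hz
    have h1 := abs_le.1 (hbA z hz Q hQ)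
    have h2 := abs_le.1 (hbB z hz P hP)
    rw [abs_le]
    constructor <;> linarith [h1.1, h1.2, h2.1, h2.2]
  have hbdd : ∀ Q : A, BddBelow (Set.range fun P : B =>
      pseudoDist X f (Q : Measure Ξ) (P : Measure Ξ)) := fun Q =>
    ⟨0, by rintro _ ⟨P, rfl⟩; exact hd0 _ _⟩
  have hS : BddAbove (Set.range fun Q : A => ⨅ P : B,
      pseudoDist X f (Q : Measure Ξ) (P : Measure Ξ)) := by
    refine ⟨2 * C, ?_⟩
    rintro _ ⟨Q, rfl⟩
    obtain ⟨P, hP⟩ := hB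
    exact (ciInf_le (hbdd Q) ⟨P, hP⟩).trans
      (ciSup_le fun z => hterm Q Q.2 P hP z z.2)
  have hSB : BddAbove (Set.range fun P : B => ∫ ξ, f x ξ ∂(P : Measure Ξ)) := by
    refine ⟨C, ?_⟩
    rintro _ ⟨P, rfl⟩
    exact (abs_le.1 (hbB x hx P P.2)).2
  refine ciSup_le fun Q => ?_
  have h1 : (∫ ξ, f x ξ ∂(Q : Measure Ξ)) - (⨆ P : B, ∫ ξ, f x ξ ∂(P : Measure Ξ)) ≤
      ⨅ P : B, pseudoDist X f (Q : Measure Ξ) (P : Measure Ξ) := by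
    refine le_ciInf fun P => ?_
    have h2 := le_ciSup hSB P
    have h3 : |(∫ ξ, f x ξ ∂(Q : Measure Ξ)) - ∫ ξ, f x ξ ∂(P : Measure Ξ)| ≤
        pseudoDist X f (Q : Measure Ξ) (P : Measure Ξ) := by
      refine le_ciSup (f := fun z : X => |(∫ ξ, f (z : E) ξ ∂(Q : Measure Ξ)) -
        ∫ ξ, f (z : E) ξ ∂(P : Measure Ξ)|) ⟨2 * C, ?_⟩ ⟨x, hx⟩
      rintro _ ⟨z, rfl⟩
      exact hterm Q Q.2 P P.2 z z.2
    have h4 := le_abs_self ((∫ ξ, f x ξ ∂(Q : Measure Ξ)) - ∫ ξ, f x ξ ∂(P : Measure Ξ))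
    linarith
  have h5 := le_ciSup hS Q
  linarith

/-- Under a second-order growth condition at `X*₁`, the deviation of `X*₂` from `X*₁` is
bounded by `√(3·ℍ(𝒫₁,𝒫₂)/τ)`. -/
theorem dro_optimal_solutions_deviation_bound
    {Ξ E : Type*} [MeasurableSpace Ξ] [NormedAddCommGroup E] [NormedSpace ℝ E]
    (X : Set E) (hXne : X.Nonempty)
    (f : E → Ξ → ℝ)
    (𝒜₁ 𝒜₂ : Set (Measure Ξ)) (h₁ : 𝒜₁.Nonempty) (h₂ : 𝒜₂.Nonempty)
    (hprob : ∀ Q ∈ 𝒜₁ ∪ 𝒜₂, IsProbabilityMeasure Q)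
    (hint : ∀ x ∈ X, ∀ Q ∈ 𝒜₁ ∪ 𝒜₂, Integrable (f x) Q)
    (C : ℝ) (hC : 0 ≤ C)
    (hb : ∀ x ∈ X, ∀ Q ∈ 𝒜₁ ∪ 𝒜₂, |∫ ξ, f x ξ ∂Q| ≤ C)
    (v₁ v₂ : ℝ) (Xstar₁ Xstar₂ : Set E)
    (hv₁ : v₁ = ⨅ x : X, ⨆ Q : 𝒜₁, ∫ ξ, f (x : E) ξ ∂(Q : Measure Ξ))
    (hv₂ : v₂ = ⨅ x : X, ⨆ Q : 𝒜₂, ∫ ξ, f (x : E) ξ ∂(Q : Measure Ξ))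
    (hX₁ : Xstar₁ = {x ∈ X | (⨆ Q : 𝒜₁, ∫ ξ, f x ξ ∂(Q : Measure Ξ)) = v₁})
    (hX₂ : Xstar₂ = {x ∈ X | (⨆ Q : 𝒜₂, ∫ ξ, f x ξ ∂(Q : Measure Ξ)) = v₂})
    (hne₁ : Xstar₁.Nonempty) (hne₂ : Xstar₂.Nonempty)
    (τ : ℝ) (hτ : 0 < τ)
    (growth : ∀ x ∈ X, v₁ + τ * (⨅ y : Xstar₁, ‖x - (y : E)‖) ^ 2 ≤
      ⨆ Q : 𝒜₁, ∫ ξ, f x ξ ∂(Q : Measure Ξ)) :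
    (⨆ x : Xstar₂, ⨅ y : Xstar₁, ‖(x : E) - (y : E)‖) ≤
      Real.sqrt (3 * hausdorffDistSets X f 𝒜₁ 𝒜₂ / τ) := by
  have hb1 : ∀ x ∈ X, ∀ Q ∈ 𝒜₁, |∫ ξ, f x ξ ∂Q| ≤ C := fun x hx Q hQ => hb x hx Q (Or.inl hQ)
  have hb2 : ∀ x ∈ X, ∀ Q ∈ 𝒜₂, |∫ ξ, f x ξ ∂Q| ≤ C := fun x hx Q hQ => hb x hx Q (Or.inr hQ)
  have hH1 : (⨆ Q : 𝒜₁, ⨅ P : 𝒜₂, pseudoDist X f (Q : Measure Ξ) (P : Measure Ξ)) ≤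
    hausdorffDistSets X f 𝒜₁ 𝒜₂ := le_max_left _ _
  have hH2 : (⨆ Q : 𝒜₂, ⨅ P : 𝒜₁, pseudoDist X f (Q : Measure Ξ) (P : Measure Ξ)) ≤
    hausdorffDistSets X f 𝒜₁ 𝒜₂ := le_max_right _ _
  have hH0 : 0 ≤ hausdorffDistSets X f 𝒜₁ 𝒜₂ :=
    le_trans (Real.iSup_nonneg fun _ => Real.iInf_nonneg fun _ =>
      Real.iSup_nonneg fun _ => abs_nonneg _) hH1
  haveI := hne₂.to_subtype
  refine ciSup_le fun x => ?_
  obtain ⟨x, hx⟩ := x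
  obtain ⟨y, hy⟩ := hne₁
  have hx' := hx
  have hy' := hy
  rw [hX₂] at hx'
  rw [hX₁] at hy'
  obtain ⟨hxX, hxv⟩ := hx'
  obtain ⟨hyX, hyv⟩ := hy'
  have e1 := sup_le_sup_add_dev X f 𝒜₁ 𝒜₂ h₁ h₂ C hb1 hb2 x hxX
  have e2 := sup_le_sup_add_dev X f 𝒜₂ 𝒜₁ h₂ h₁ C hb2 hb1 y hyX
  have e3 : v₂ ≤ ⨆ Q : 𝒜₂, ∫ ξ, f y ξ ∂(Q : Measure Ξ) := by
    rw [hv₂]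
    refine ciInf_le (f := fun z : X => ⨆ Q : 𝒜₂, ∫ ξ, f (z : E) ξ ∂(Q : Measure Ξ))
      ⟨-C, ?_⟩ ⟨y, hyX⟩
    rintro _ ⟨z, rfl⟩
    obtain ⟨P, hP⟩ := h₂
    refine (abs_le.1 (hb2 z z.2 P hP)).1.trans ?_
    refine le_ciSup (f := fun Q : 𝒜₂ => ∫ ξ, f (z : E) ξ ∂(Q : Measure Ξ)) ⟨C, ?_⟩ ⟨P, hP⟩
    rintro _ ⟨Q, rfl⟩
    exact (abs_le.1 (hb2 z z.2 Q Q.2)).2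
  have e4 := growth x hxX
  apply Real.le_sqrt_of_sq_le
  rw [le_div_iff₀ hτ]
  dsimp only
  linarith
end
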